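/- Let a > 0, b > 0 and f(w) = −1/(a w² + b) for w ∈ ℝ. Then for every w ∈ ℝ and every β ≥ 0, |f(w)| · sup_{|w̃ − w| ≤ β} ∫₀^∞ |e^{f(w̃) t} − e^{f(w) t}| dt ≤ a β²/b + β √(a/b). In particular, since β ↦ a β²/b + β √(a/b) is continuous and vanishes at 0, f is a stable reparameterization. -/

import Mathlib

open Set

theorem aux_int1 (P Q : ℝ) (hP : 0 < P) (hPQ : P ≤ Q) :
    ∫ t in Ioi (0:ℝ), |Real.exp (-(1 / Q) * t) - Real.exp (-(1 / P) * t)| = Q - P := by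
  have hQ : 0 < Q := hP.trans_le hPQ
  have h1 : -(1 / Q) < 0 := by have : 0 < 1 / Q := by positivity
                               linarith
  have h2 : -(1 / P) < 0 := by have : 0 < 1 / P := by positivity
                               linarith
  have h3 : 1 / Q ≤ 1 / P := one_div_le_one_div_of_le hP hPQ
  have e : ∫ t in Ioi (0:ℝ), |Real.exp (-(1 / Q) * t) - Real.exp (-(1 / P) * t)|
      = ∫ t in Ioi (0:ℝ), (Real.exp (-(1 / Q) * t) - Real.exp (-(1 / P) * t)) := by
    apply MeasureTheory.setIntegral_congr_fun measurableSet_Ioi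
    intro t ht
    have ht' : (0:ℝ) < t := ht
    apply abs_of_nonneg
    have : Real.exp (-(1 / P) * t) ≤ Real.exp (-(1 / Q) * t) := by
      apply Real.exp_le_exp.2
      nlinarith
    linarith
  rw [e, MeasureTheory.integral_sub (integrableOn_exp_mul_Ioi h1 0)
    (integrableOn_exp_mul_Ioi h2 0), integral_exp_mul_Ioi h1, integral_exp_mul_Ioi h2]
  simp

theorem aux_int (P Q : ℝ) (hP : 0 < P) (hQ : 0 < Q) :
    ∫ t in Ioi (0:ℝ), |Real.exp (-(1 / Q) * t) - Real.exp (-(1 / P) * t)| = |Q - P| := by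
  rcases le_total P Q with h | h
  · rw [aux_int1 P Q hP h, abs_of_nonneg (by linarith)]
  · simp_rw [abs_sub_comm (Real.exp (-(1 / Q) * _))]
    rw [aux_int1 Q P hQ h, abs_sub_comm, abs_of_nonneg (by linarith)]



/-- The "best" reparameterization `f(w) = −1/(a w² + b)` (with `a, b > 0`) is stable:
for every `w` and `β ≥ 0`,
`|f(w)| ⬝ sup_{|w' − w| ≤ β} ∫₀^∞ |e^{f(w') t} − e^{f(w) t}| dt ≤ a β²/b + β √(a/b)`,
a continuous modulus vanishing at `0`. -/
theorem stmt8 (a b : ℝ) (ha : 0 < a) (hb : 0 < b) (β : ℝ) (hβ : 0 ≤ β) (w : ℝ) :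
    |(-(1 / (a * w ^ 2 + b)))| *
      (⨆ wt : {x : ℝ // |x - w| ≤ β},
        ∫ t in Ioi (0:ℝ),
          |Real.exp (-(1 / (a * (wt : ℝ) ^ 2 + b)) * t) -
            Real.exp (-(1 / (a * w ^ 2 + b)) * t)|)
      ≤ a * β ^ 2 / b + β * Real.sqrt (a / b) := by

  have hP : 0 < a * w ^ 2 + b := by positivity
  haveI : Nonempty {x : ℝ // |x - w| ≤ β} := ⟨⟨w, by simpa using hβ⟩⟩
  have hs : (⨆ wt : {x : ℝ // |x - w| ≤ β},
        ∫ t in Ioi (0:ℝ),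
          |Real.exp (-(1 / (a * (wt : ℝ) ^ 2 + b)) * t) -
            Real.exp (-(1 / (a * w ^ 2 + b)) * t)|) ≤ a * (β * (2 * |w| + β)) := by
    apply ciSup_le
    rintro ⟨x, hx⟩
    rw [aux_int _ _ hP (by positivity)]
    have e : a * x ^ 2 + b - (a * w ^ 2 + b) = a * ((x - w) * (2 * w + (x - w))) := by ring
    rw [e, abs_mul, abs_mul, abs_of_pos ha]
    have h2 : |2 * w + (x - w)| ≤ 2 * |w| + β := by
      have := abs_add_le (2 * w) (x - w)
      rw [abs_mul, abs_two] at this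
      linarith
    gcongr
  rw [abs_neg, abs_of_pos (by positivity : 0 < 1 / (a * w ^ 2 + b))]
  refine (mul_le_mul_of_nonneg_left hs (by positivity)).trans ?_
  obtain ⟨s, hsd⟩ : ∃ s, s = Real.sqrt (a / b) := ⟨_, rfl⟩
  have hs0 : 0 ≤ s := hsd ▸ Real.sqrt_nonneg _
  have hsq : s ^ 2 * b = a := by
    rw [hsd, Real.sq_sqrt (by positivity)]
    field_simp
  rw [← hsd, one_div_mul_eq_div, div_le_iff₀ hP]
  have k1 : a * β ^ 2 ≤ a * β ^ 2 / b * (a * w ^ 2 + b) := by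
    have : a * β ^ 2 / b * (a * w ^ 2 + b) = a * β ^ 2 + a * β ^ 2 / b * (a * w ^ 2) := by
      field_simp
      ring
    rw [this]
    have : 0 ≤ a * β ^ 2 / b * (a * w ^ 2) := by positivity
    linarith
  have k2 : 2 * a * |w| ≤ s * (a * w ^ 2 + b) := by
    rw [← hsq, ← sq_abs w]
    have : 0 ≤ s * b * (s * |w| - 1) ^ 2 := by positivity
    nlinarith
  have k3 := mul_le_mul_of_nonneg_left k2 hβ
  nlinarith
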